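/- Let q be a prime power with q ≥ 5 and let P be a closed point of degree 3 of P² over F_q not contained in any F_q-rational line, given by a point p ∈ P²(F_{q³}) whose Frobenius orbit {p, φ(p), φ²(p)} has exactly 3 elements, these three points being non-collinear. Let V be the F_q-vector space of homogeneous polynomials of degree 5 in F_q[x,y,z] vanishing at p. Then the evaluation code C_L(Z, L_5), obtained by evaluating the elements of V at the q² + q + 1 points of P²(F_q), has parameters [q² + q + 1, 18, q² − 3q − 1]: its length is q² + q + 1, its dimension is 18 (in particular dim V = 18 and the evaluation map is injective), and its minimum distance is exactly q² − 3q − 1. -/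

import Mathlib

open MvPolynomial

noncomputable section

/-!
Let `N` be the number of rational points of a plane curve of degree `n` without rational linear
component. A tangent at a rational point counts twice among the at most `n` intersections of a line
with the curve. The deficiencies `n - #(points on l)` of the lines through a rational point of the
curve add up to `n * (q + 1) - q - N`. Double counting then yields
`2 * (N + q) ≤ n * (2 * q + 1)`, which is `N + q ≤ n * q + 1` for `n ≤ 3` and `N + q ≤ 5 * q + 2`
for `n = 5`.

For `n = 4` equality has to be excluded. It would force every line to meet the curve in 0, 2 or 4
points, `q` to be even and `N / 2` lines to be bitangents. In characteristic 2 the gradient of a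
quartic at `x` is `(A x²) × x` for a constant matrix `A` (squares being taken coordinatewise), so
that a bitangent `l` satisfies `l A = c l²` for a scalar `c`. The bitangents with `c = 0` are
concurrent, and those with `c ≠ 0` are fewer than 8 because they come from the nonzero solutions of
a semilinear equation on a space of dimension 3; these are too few bitangents in total.

No rational line passes through the closed point `P`, so rational linear components can be split
off from a curve through `P`; as two lines always meet, induction gives `N ≤ 4 * q + 2` for quintics
through `P`. Averaging over the conics through `P`, which form a 3-dimensional space, gives one with
`q + 1` points. These points form an arc, and counting its external lines shows that three of them
are concurrent: together with the conic they form a quintic with `4 * q + 2` points. Finally,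
`18 = 21 - 3` because the coordinates of `P` are an `F_q`-basis of `F_{q³}`.
-/

section FiniteProjectivePlane

open Configuration ProjectivePlane Finset

variable {P L : Type*} [Membership P L]

open Classical in
/-- The pencil of lines with centre `R`. -/
def pencil (L : Type*) [Membership P L] [Fintype L] (R : P) : Finset L := {l | R ∈ l}

open Classical in
/-- The number of points of `K` on the line `l`. -/
def secantNumber (K : Finset P) (l : L) : ℕ := #{p ∈ K | p ∈ l}

open Classical in
/-- The number of points of `K` at which the line `l` is tangent, for a tangency relation `Tan`. -/
def tangencyNumber (K : Finset P) (Tan : P → L → Prop) (l : L) : ℕ := #{p ∈ K | Tan p l}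

/-- `IsTangency K d Tan` says that the relation `Tan` between points and lines behaves like
tangency to a plane curve of degree `d` without linear components whose rational points are `K`:
points of tangency count twice among the at most `d` intersections with a line. -/
structure IsTangency (K : Finset P) (d : ℕ) (Tan : P → L → Prop) : Prop where
  exists_tangent : ∀ p ∈ K, ∃ l, Tan p l
  mem_of_tangent : ∀ p ∈ K, ∀ l, Tan p l → p ∈ l
  bezout : ∀ l, secantNumber K l + tangencyNumber K Tan l ≤ d

variable {K : Finset P} {Tan : P → L → Prop} {d : ℕ} {l : L} {R : P}

theorem secantNumber_eq_zero_iff : secantNumber K l = 0 ↔ ∀ p ∈ K, p ∉ l := by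
  simp [secantNumber, filter_eq_empty_iff]

theorem secantNumber_pos_iff : 0 < secantNumber K l ↔ ∃ p ∈ K, p ∈ l := by
  simp [secantNumber, card_pos, filter_nonempty_iff]

theorem IsTangency.secantNumber_le (h : IsTangency K d Tan) (l : L) : secantNumber K l ≤ d :=
  (Nat.le_add_right _ _).trans (h.bezout l)

theorem IsTangency.tangencyNumber_eq_zero (h : IsTangency K d Tan) (hl : secantNumber K l = 0) :
    tangencyNumber K Tan l = 0 := by
  classical
  rw [tangencyNumber, card_eq_zero, filter_eq_empty_iff]
  exact fun p hp hpl => secantNumber_eq_zero_iff.1 hl p hp (h.mem_of_tangent p hp l hpl)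

@[simp]
theorem mem_pencil [Fintype L] : l ∈ pencil L R ↔ R ∈ l := by simp [pencil]

theorem sum_secantNumber_mul [Fintype L] (K : Finset P) (g : L → ℕ) :
    ∑ l, secantNumber K l * g l = ∑ p ∈ K, ∑ l ∈ pencil L p, g l := by
  classical
  simp_rw [secantNumber, pencil, card_filter, sum_mul, ite_mul, one_mul, zero_mul, sum_filter]
  exact sum_comm

omit [Membership P L] in
open Classical in
theorem sum_tangencyNumber [Fintype L] (K : Finset P) (Tan : P → L → Prop) :
    ∑ l, tangencyNumber K Tan l = ∑ p ∈ K, #{l | Tan p l} := by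
  simp_rw [tangencyNumber, card_filter]
  exact sum_comm

open Classical in
theorem IsTangency.one_le_card_tangents [Fintype L] (h : IsTangency K d Tan) {p : P} (hp : p ∈ K) :
    1 ≤ #{l | Tan p l} := by
  obtain ⟨l, hl⟩ := h.exists_tangent p hp
  exact card_pos.2 ⟨l, by simpa using hl⟩

theorem IsTangency.card_le_sum_tangencyNumber [Fintype L] (h : IsTangency K d Tan) :
    #K ≤ ∑ l, tangencyNumber K Tan l := by
  rw [sum_tangencyNumber, card_eq_sum_ones]
  exact sum_le_sum fun p hp => h.one_le_card_tangents hp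

section Pencil

variable [ProjectivePlane P L]

open Classical in
theorem card_pencil_filter_mem [Fintype L] {p : P} (h : p ≠ R) :
    #{l ∈ pencil L R | p ∈ l} = 1 := by
  obtain ⟨hp, hR⟩ := mkLine_ax (L := L) h
  refine card_eq_one.2 ⟨mkLine h, eq_singleton_iff_unique_mem.2 ⟨by simp [hp, hR], fun l hl => ?_⟩⟩
  obtain ⟨hRl, hpl⟩ := mem_filter.1 hl
  exact (Nondegenerate.eq_or_eq hpl (mem_pencil.1 hRl) hp hR).resolve_left h

theorem secantNumber_univ [Fintype P] [Finite L] (l : L) :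
    secantNumber univ l = order P L + 1 := by
  classical
  rw [← pointCount_eq P l, pointCount, Nat.card_eq_fintype_card, Fintype.card_subtype,
    secantNumber]

variable [Finite P] [Fintype L]

theorem card_pencil (R : P) : #(pencil L R) = order P L + 1 := by
  classical
  rw [← lineCount_eq (L := L) R, lineCount, Nat.card_eq_fintype_card, Fintype.card_subtype, pencil]

open Classical in
theorem sum_secantNumber_pencil (K : Finset P) (R : P) :
    ∑ l ∈ pencil L R, secantNumber K l = #K + if R ∈ K then order P L else 0 := by
  have lines_through (p : P) :
      ∑ l ∈ pencil L R, (if p ∈ l then 1 else 0) = 1 + if p = R then order P L else 0 := by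
    rw [← card_filter]
    split_ifs with h
    · rw [h, filter_true_of_mem fun l hl => mem_pencil.1 hl, card_pencil, add_comm]
    · exact card_pencil_filter_mem h
  simp_rw [secantNumber, card_filter]
  rw [sum_comm, sum_congr rfl fun p _ => lines_through p, sum_add_distrib]
  simp

theorem card_mul_order_lt_card {A : Finset L} (hA : A.Nonempty) (hAR : A ⊆ pencil L R)
    (hK : ∀ l ∈ A, ∀ p : P, p ∈ l → p ∈ K) : #A * order P L < #K := by
  classical
  have := Fintype.ofFinite P
  obtain ⟨l₀, hl₀⟩ := hA
  have hR : R ∈ K := hK l₀ hl₀ R (mem_pencil.1 (hAR hl₀))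
  have lower (l : L) (hl : l ∈ pencil L R) :
      (1 + if l ∈ A then order P L else 0) ≤ secantNumber K l := by
    split_ifs with hlA
    · rw [add_comm, ← secantNumber_univ]
      exact card_le_card fun p hp => mem_filter.2
        ⟨hK l hlA p (mem_filter.1 hp).2, (mem_filter.1 hp).2⟩
    · exact secantNumber_pos_iff.2 ⟨R, hR, mem_pencil.1 hl⟩
  have sum_le := sum_le_sum lower
  rw [sum_secantNumber_pencil, if_pos hR, sum_add_distrib, ← sum_filter, filter_mem_eq_inter,
    inter_eq_right.2 hAR, sum_const, sum_const, card_pencil, smul_eq_mul, smul_eq_mul] at sum_le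
  omega

open Classical in
theorem sum_deficiency_pencil (hd : ∀ l : L, secantNumber K l ≤ d) (R : P) :
    ∑ l ∈ pencil L R, (d - secantNumber K l) + (#K + if R ∈ K then order P L else 0) =
      d * (order P L + 1) := by
  rw [← sum_secantNumber_pencil (L := L), ← sum_add_distrib,
    sum_congr rfl fun l _ => Nat.sub_add_cancel (hd l), sum_const, card_pencil, smul_eq_mul,
    mul_comm]

end Pencil

section Deficiency

variable [ProjectivePlane P L] [Finite P] {D : ℕ} (hd : ∀ l : L, secantNumber K l ≤ d)
  (hD : #K + order P L + D = d * (order P L + 1))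
include hd hD

theorem sum_deficiency_pencil_of_mem [Fintype L] {p : P} (hp : p ∈ K) :
    ∑ l ∈ pencil L p, (d - secantNumber K l) = D := by
  have := sum_deficiency_pencil hd p
  rw [if_pos hp] at this
  omega

theorem sum_secantNumber_mul_deficiency [Fintype L] :
    ∑ l : L, secantNumber K l * (d - secantNumber K l) = #K * D := by
  rw [sum_secantNumber_mul, sum_const_nat fun p hp => sum_deficiency_pencil_of_mem hd hD hp]

theorem deficiency_le_of_secantNumber_pos [Finite L] (hl : 0 < secantNumber K l) :
    d - secantNumber K l ≤ D := by
  have := Fintype.ofFinite L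
  obtain ⟨p, hpK, hpl⟩ := secantNumber_pos_iff.1 hl
  rw [← sum_deficiency_pencil_of_mem hd hD hpK]
  exact single_le_sum (f := fun l => d - secantNumber K l) (fun _ _ => Nat.zero_le _)
    (mem_pencil.2 hpl)

end Deficiency

section Arc

variable [ProjectivePlane P L] [Finite P] [Fintype L]

open Classical in
theorem two_mul_card_external_lines (harc : ∀ l : L, secantNumber K l ≤ 2)
    (hK : #K = order P L + 1) :
    2 * #{l : L | secantNumber K l = 0} + order P L = order P L ^ 2 := by
  have split (l : L) : 2 = (if secantNumber K l = 0 then 2 else 0) + secantNumber K l * 1 +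
      secantNumber K l * (2 - secantNumber K l) := by
    have := harc l
    interval_cases secantNumber K l <;> rfl
  have card_lines := card_lines P L
  rw [← card_univ] at card_lines
  have sum_split := sum_congr (rfl : (univ : Finset L) = univ) fun l _ => split l
  rw [sum_add_distrib, sum_add_distrib, sum_secantNumber_mul,
    sum_secantNumber_mul_deficiency harc (D := 1) (by rw [hK]; ring), ← sum_filter, sum_const,
    sum_const, card_lines, sum_const_nat (m := order P L + 1), hK] at sum_split
  · simp only [smul_eq_mul] at sum_split
    linarith
  · intro p _
    rw [sum_const, card_pencil, smul_eq_mul, mul_one]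

open Classical in
theorem exists_two_lt_card_concurrent_external_lines (harc : ∀ l : L, secantNumber K l ≤ 2)
    (hK : #K = order P L + 1) (hq : 5 ≤ order P L) :
    ∃ R, 2 < #{l ∈ pencil L R | secantNumber K l = 0} := by
  have := Fintype.ofFinite P
  by_contra! hle
  have zero_of_mem (R : P) (hR : R ∈ K) : #{l ∈ pencil L R | secantNumber K l = 0} = 0 :=
    card_eq_zero.2 <| filter_eq_empty_iff.2 fun l hl h0 =>
      secantNumber_eq_zero_iff.1 h0 R hR (mem_pencil.1 hl)
  have double_count : ∑ R : P, #{l ∈ pencil L R | secantNumber K l = 0} =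
      (order P L + 1) * #{l : L | secantNumber K l = 0} := by
    simp_rw [card_filter, ← sum_secantNumber_mul, secantNumber_univ, mul_sum]
  have le_two : ∑ R : P, #{l ∈ pencil L R | secantNumber K l = 0} + 2 * #K ≤
      2 * (order P L ^ 2 + order P L + 1) := by
    rw [← card_points P L, ← sum_add_sum_compl K, sum_eq_zero zero_of_mem, zero_add,
      ← card_compl_add_card K, mul_add, mul_comm 2 #Kᶜ]
    exact Nat.add_le_add_right (sum_le_card_nsmul _ _ 2 fun R _ => hle R) _
  have external := two_mul_card_external_lines harc hK
  have := Nat.mul_le_mul_left (order P L) (Nat.mul_le_mul_left (order P L) hq)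
  nlinarith

end Arc

namespace IsTangency

variable [ProjectivePlane P L] [Finite P]

theorem mul_tangencyNumber_le [Finite L] {D : ℕ} (h : IsTangency K d Tan)
    (hD : #K + order P L + D = d * (order P L + 1)) (l : L) :
    (d - D) * tangencyNumber K Tan l ≤ secantNumber K l * (d - secantNumber K l) := by
  have bezout := h.bezout l
  obtain hl | hl := (secantNumber K l).eq_zero_or_pos
  · simp [h.tangencyNumber_eq_zero hl]
  · have := deficiency_le_of_secantNumber_pos h.secantNumber_le hD hl
    exact Nat.mul_le_mul (by omega) (by omega)

theorem two_mul_card_add_order_le [Finite L] (h : IsTangency K d Tan) (hd : 0 < d) :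
    2 * (#K + order P L) ≤ d * (2 * order P L + 1) := by
  have := Fintype.ofFinite L
  obtain rfl | ⟨p, hp⟩ := K.eq_empty_or_nonempty
  · simp only [card_empty]
    nlinarith
  by_contra! hlt
  obtain ⟨D, hD⟩ : ∃ D, #K + order P L + D = d * (order P L + 1) := by
    have := sum_deficiency_pencil h.secantNumber_le p
    rw [if_pos hp] at this
    exact ⟨_, (add_comm _ _).trans this⟩
  have : #K * (d - D) ≤ #K * D :=
    calc #K * (d - D) ≤ (∑ l, tangencyNumber K Tan l) * (d - D) :=
          Nat.mul_le_mul_right _ h.card_le_sum_tangencyNumber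
      _ ≤ ∑ l, secantNumber K l * (d - secantNumber K l) := by
          rw [mul_comm, mul_sum]
          exact sum_le_sum fun l _ => h.mul_tangencyNumber_le hD l
      _ = #K * D := sum_secantNumber_mul_deficiency h.secantNumber_le hD
  have := Nat.le_of_mul_le_mul_left this (card_pos.2 ⟨p, hp⟩)
  nlinarith [Nat.sub_le_iff_le_add.1 this]

section Extremal

variable {m : ℕ} (h : IsTangency K (2 * m) Tan) (hm : 0 < m)
  (hK : #K + order P L + m = 2 * m * (order P L + 1))
include h hm hK

theorem mul_tangencyNumber_eq_and_sum_eq [Fintype L] :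
    (∀ l, m * tangencyNumber K Tan l = secantNumber K l * (2 * m - secantNumber K l)) ∧
      ∑ l, tangencyNumber K Tan l = #K := by
  have le (l : L) : m * tangencyNumber K Tan l ≤ secantNumber K l * (2 * m - secantNumber K l) := by
    simpa only [two_mul, Nat.add_sub_cancel] using h.mul_tangencyNumber_le hK l
  have sum_eq := sum_secantNumber_mul_deficiency h.secantNumber_le hK
  have sum_le := sum_le_sum fun l (_ : l ∈ univ) => le l
  rw [sum_eq, ← mul_sum, mul_comm] at sum_le
  have tangents_eq :=
    (Nat.le_of_mul_le_mul_right sum_le hm).antisymm h.card_le_sum_tangencyNumber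
  refine ⟨fun l => (sum_eq_sum_iff_of_le fun l _ => le l).1 ?_ l (mem_univ l), tangents_eq⟩
  rw [← mul_sum, tangents_eq, sum_eq, mul_comm]

open Classical in
theorem card_tangents_eq_one [Fintype L] {p : P} (hp : p ∈ K) : #{l | Tan p l} = 1 := by
  have sum_eq := (h.mul_tangencyNumber_eq_and_sum_eq hm hK).2
  rw [sum_tangencyNumber, card_eq_sum_ones] at sum_eq
  exact ((sum_eq_sum_iff_of_le fun p hp => h.one_le_card_tangents hp).1 sum_eq.symm p hp).symm

variable [Finite L]

theorem mul_tangencyNumber_eq (l : L) :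
    m * tangencyNumber K Tan l = secantNumber K l * (2 * m - secantNumber K l) :=
  have := Fintype.ofFinite L
  (h.mul_tangencyNumber_eq_and_sum_eq hm hK).1 l

theorem secantNumber_eq_or (l : L) :
    secantNumber K l = 0 ∨ secantNumber K l = m ∨ secantNumber K l = 2 * m := by
  obtain hl | hl := (secantNumber K l).eq_zero_or_pos
  · exact .inl hl
  obtain ⟨e, he⟩ := Nat.exists_eq_add_of_le (h.secantNumber_le l)
  have deficiency_le := deficiency_le_of_secantNumber_pos h.secantNumber_le hK hl
  have tangency_eq := h.mul_tangencyNumber_eq hm hK l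
  have bezout := h.bezout l
  obtain rfl | he_pos := e.eq_zero_or_pos
  · omega
  have : secantNumber K l * e ≤ m * e := by
    rw [show 2 * m - secantNumber K l = e by omega] at tangency_eq
    rw [← tangency_eq]
    exact Nat.mul_le_mul_left _ (by omega)
  have := Nat.le_of_mul_le_mul_right this he_pos
  omega

theorem tangencyNumber_eq (hl : secantNumber K l = m) : tangencyNumber K Tan l = m := by
  have := h.mul_tangencyNumber_eq hm hK l
  rw [hl, two_mul, Nat.add_sub_cancel] at this
  exact Nat.eq_of_mul_eq_mul_left hm this

theorem dvd_order : m ∣ order P L := by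
  classical
  have := Fintype.ofFinite P
  have := Fintype.ofFinite L
  have ne_univ : K ≠ univ := by
    rintro rfl
    rw [card_univ, card_points P L] at hK
    have : 2 * order P L + 1 ∣ (2 * order P L + 1) * (2 * order P L + 3) + 1 :=
      ⟨4 * m, by linarith⟩
    have := Nat.dvd_one.1 ((Nat.dvd_add_right (Dvd.intro _ rfl)).1 this)
    have := one_lt_order P L
    omega
  obtain ⟨R, hR⟩ : ∃ R, R ∉ K := by simpa [eq_univ_iff_forall] using ne_univ
  have deficiency := sum_deficiency_pencil h.secantNumber_le R
  rw [if_neg hR] at deficiency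
  have dvd_sum : m ∣ ∑ l ∈ pencil L R, (2 * m - secantNumber K l) := by
    refine dvd_sum fun l _ => ?_
    obtain hl | hl | hl := h.secantNumber_eq_or hm hK l <;> simp [hl, two_mul]
  rwa [show ∑ l ∈ pencil L R, (2 * m - secantNumber K l) = order P L + m by omega,
    Nat.dvd_add_self_right] at dvd_sum

end Extremal

section ExtremalCount

variable [Fintype L] {m : ℕ} (h : IsTangency K (2 * m) Tan) (hm : 0 < m)
  (hK : #K + order P L + m = 2 * m * (order P L + 1))
include h hm hK

theorem mul_card_filter_secantNumber_eq : m * #{l : L | secantNumber K l = m} = #K := by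
  have term (l : L) : secantNumber K l * (2 * m - secantNumber K l) =
      if secantNumber K l = m then m * m else 0 := by
    obtain hl | hl | hl := h.secantNumber_eq_or hm hK l
    · simp [hl, hm.ne]
    · simp [hl, two_mul]
    · simp [hl, hm.ne']
  have sum_eq := sum_secantNumber_mul_deficiency h.secantNumber_le hK
  rw [sum_congr rfl fun l _ => term l, ← sum_filter, sum_const, smul_eq_mul, ← mul_assoc] at sum_eq
  rw [mul_comm]
  exact Nat.eq_of_mul_eq_mul_right hm sum_eq

omit hm in
theorem mul_card_filter_pencil_le (R : P) :
    m * #{l ∈ pencil L R | secantNumber K l = m} ≤ order P L + m := by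
  classical
  have deficiency := sum_deficiency_pencil h.secantNumber_le R
  have : m * #{l ∈ pencil L R | secantNumber K l = m} ≤
      ∑ l ∈ pencil L R, (2 * m - secantNumber K l) := by
    rw [mul_comm, ← smul_eq_mul, ← sum_const]
    exact (sum_le_sum fun l hl => by rw [(mem_filter.1 hl).2]; omega).trans
      (sum_le_sum_of_subset (filter_subset _ _))
  omega

end ExtremalCount

end IsTangency

end FiniteProjectivePlane

section PlaneCurves

open Configuration Configuration.ProjectivePlane Matrix
open scoped Finset LinearAlgebra.Projectivization

section Homogeneous

variable {σ R : Type*} [CommRing R]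

theorem eval_smul_of_isHomogeneous {n : ℕ} {f : MvPolynomial σ R} (hf : f.IsHomogeneous n) (c : R)
    (x : σ → R) : eval (c • x) f = c ^ n * eval x f := by
  rw [eval_eq, eval_eq, Finset.mul_sum]
  refine Finset.sum_congr rfl fun d hd => ?_
  simp only [Pi.smul_apply, smul_eq_mul, mul_pow, Finset.prod_mul_distrib,
    Finset.prod_pow_eq_pow_sum, ← hf.degree_eq_sum_deg_support hd]
  ring

/-- The vector of formal partial derivatives of the polynomial `f` at the point `x`. -/
def formalGradient (f : MvPolynomial σ R) (x : σ → R) : σ → R := fun i => eval x (pderiv i f)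

theorem formalGradient_sum {ι : Type*} (s : Finset ι) (g : ι → MvPolynomial σ R) (x : σ → R) :
    formalGradient (∑ i ∈ s, g i) x = ∑ i ∈ s, formalGradient (g i) x := by
  ext
  simp [formalGradient]

theorem formalGradient_C_mul (a : R) (g : MvPolynomial σ R) (x : σ → R) :
    formalGradient (C a * g) x = a • formalGradient g x := by
  ext
  simp [formalGradient]

theorem formalGradient_mul (f g : MvPolynomial σ R) (x : σ → R) :
    formalGradient (f * g) x = eval x f • formalGradient g x + eval x g • formalGradient f x := by
  ext
  simp [formalGradient, Derivation.leibniz]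

theorem formalGradient_X [DecidableEq σ] (i : σ) (x : σ → R) :
    formalGradient (X i) x = Pi.single i 1 := by
  ext j
  obtain rfl | hij := eq_or_ne i j
  · simp [formalGradient]
  · simp [formalGradient, pderiv_X_of_ne hij, Pi.single_eq_of_ne' hij]

theorem formalGradient_smul_of_isHomogeneous {n : ℕ} {f : MvPolynomial σ R} (hf : f.IsHomogeneous n)
    (c : R) (x : σ → R) : formalGradient f (c • x) = c ^ (n - 1) • formalGradient f x :=
  funext fun _ => eval_smul_of_isHomogeneous hf.pderiv c x

theorem formalGradient_dotProduct_self [Fintype σ] {n : ℕ} {f : MvPolynomial σ R}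
    (hf : f.IsHomogeneous n) (x : σ → R) : formalGradient f x ⬝ᵥ x = n * eval x f := by
  have euler := congr_arg (eval x) hf.sum_X_mul_pderiv
  simpa [formalGradient, dotProduct, mul_comm] using euler

/-- The restriction of `f` to the affine line parametrised by `t ↦ u + t • w`. -/
def restrictLine (u w : σ → R) : MvPolynomial σ R →ₐ[R] Polynomial R :=
  aeval fun i => Polynomial.C (u i) + Polynomial.C (w i) * Polynomial.X

theorem eval_restrictLine (u w : σ → R) (f : MvPolynomial σ R) (t : R) :
    (restrictLine u w f).eval t = eval (u + t • w) f := by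
  have : (Polynomial.aeval t).comp (restrictLine u w) = aeval (u + t • w) := by
    ext i
    simp [restrictLine, mul_comm t]
  simpa [Polynomial.coe_aeval_eq_eval] using DFunLike.congr_fun this f

theorem derivative_restrictLine [Fintype σ] (u w : σ → R) (f : MvPolynomial σ R) :
    (restrictLine u w f).derivative =
      ∑ i, restrictLine u w (pderiv i f) * Polynomial.C (w i) := by
  classical
  induction f using MvPolynomial.induction_on with
  | C a => simp [restrictLine]
  | add p q hp hq => simp only [map_add, hp, hq, add_mul, Finset.sum_add_distrib]
  | mul_X p i hp =>
    have derivative_X : (restrictLine u w (X i)).derivative = Polynomial.C (w i) := by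
      simp [restrictLine]
    have pderiv_mul_X (j : σ) : restrictLine u w (pderiv j (p * X i)) * Polynomial.C (w j) =
        restrictLine u w (pderiv j p) * Polynomial.C (w j) * restrictLine u w (X i) +
          if j = i then restrictLine u w p * Polynomial.C (w i) else 0 := by
      obtain rfl | hj := eq_or_ne j i
      · simp only [Derivation.leibniz, pderiv_X_self, smul_eq_mul, map_add, map_mul, map_one,
          if_pos]
        ring
      · simp only [Derivation.leibniz, pderiv_X_of_ne hj.symm, smul_eq_mul, map_add, map_mul,
          map_zero, if_neg hj]
        ring
    simp only [map_mul, Polynomial.derivative_mul, hp, derivative_X, pderiv_mul_X,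
      Finset.sum_add_distrib, Finset.sum_mul, Finset.sum_ite_eq', Finset.mem_univ, if_true]

theorem natDegree_restrictLine_le {n : ℕ} {f : MvPolynomial σ R} (hf : f.IsHomogeneous n)
    (u w : σ → R) : (restrictLine u w f).natDegree ≤ n := by
  refine (aeval_natDegree_le f hf.totalDegree_le _ fun i => ?_).trans (mul_one n).le
  compute_degree

theorem coeff_restrictLine {n : ℕ} {f : MvPolynomial σ R} (hf : f.IsHomogeneous n)
    (u w : σ → R) : (restrictLine u w f).coeff n = eval w f := by
  have monomial_coeff (d : σ →₀ ℕ) (hd : d ∈ f.support) :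
      (d.prod fun i k => (Polynomial.C (u i) + Polynomial.C (w i) * Polynomial.X) ^ k).coeff n =
        d.prod fun i k => w i ^ k := by
    have := Polynomial.coeff_prod_of_natDegree_le
      (d.support.sigma fun i => Finset.range (d i))
      (fun x => Polynomial.C (u x.1) + Polynomial.C (w x.1) * Polynomial.X) 1
      fun _ _ => by compute_degree
    simpa [Finset.prod_sigma, ← hf.degree_eq_sum_deg_support hd, Finsupp.prod] using this
  rw [restrictLine, aeval_def, eval₂, Finsupp.sum, Polynomial.finsetSum_coeff, eval_eq]
  refine Finset.sum_congr rfl fun d hd => ?_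
  rw [Polynomial.algebraMap_eq, Polynomial.coeff_C_mul]
  exact congr_arg _ (monomial_coeff d hd)

end Homogeneous

section Projective

variable {F : Type*} [Field F] {n : ℕ} {f : MvPolynomial (Fin 3) F} {p l U W : ℙ F (Fin 3 → F)}

theorem eq_of_smul_rep_eq {a : F} (h : a • U.rep = p.rep) : p = U := by
  rw [← p.mk_rep, ← U.mk_rep, Projectivization.mk_eq_mk_iff']
  exact ⟨a, h⟩

theorem mem_iff_dotProduct_rep_eq_zero : p ∈ l ↔ l.rep ⬝ᵥ p.rep = 0 := by
  rw [ofField.mem_iff, Projectivization.orthogonal_comm]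
  conv_lhs => rw [← p.mk_rep, ← l.mk_rep]
  exact Projectivization.orthogonal_mk l.rep_nonzero p.rep_nonzero

theorem exists_mem_line [Finite F] (p : ℙ F (Fin 3 → F)) : ∃ l : ℙ F (Fin 3 → F), p ∈ l := by
  classical
  have := Fintype.ofFinite (ℙ F (Fin 3 → F))
  have : (pencil (ℙ F (Fin 3 → F)) p).Nonempty := Finset.card_pos.1 (by rw [card_pencil]; omega)
  exact this.imp fun l => mem_pencil.1

theorem exists_mem_line_ne [Finite F] (l W : ℙ F (Fin 3 → F)) : ∃ U ∈ l, U ≠ W := by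
  classical
  have := Fintype.ofFinite (ℙ F (Fin 3 → F))
  have one_lt_card : 1 < secantNumber Finset.univ l := by
    rw [secantNumber_univ]
    exact Nat.lt_succ_of_lt (one_lt_order _ _)
  exact (Finset.exists_mem_ne one_lt_card W).imp fun U => And.imp_left fun hU =>
    (Finset.mem_filter.1 hU).2

theorem eval_rep_mk_eq_zero_iff (hf : f.IsHomogeneous n) {x : Fin 3 → F} (hx : x ≠ 0) :
    eval (Projectivization.mk F x hx).rep f = 0 ↔ eval x f = 0 := by
  obtain ⟨a, ha⟩ := Projectivization.exists_smul_eq_mk_rep F x hx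
  rw [← ha, Units.smul_def, eval_smul_of_isHomogeneous hf]
  simp

theorem not_linearIndependent_of_mem_line (hp : p ∈ l) (hU : U ∈ l) (hW : W ∈ l) :
    ¬LinearIndependent F ![p.rep, U.rep, W.rep] := by
  intro h
  have det_ne_zero : (of ![p.rep, U.rep, W.rep]).det ≠ 0 :=
    ((isUnit_iff_isUnit_det _).1 (linearIndependent_rows_iff_isUnit.1 h)).ne_zero
  refine l.rep_nonzero (eq_zero_of_mulVec_eq_zero det_ne_zero (funext fun i => ?_))
  rw [mem_iff_dotProduct_rep_eq_zero, dotProduct_comm] at hp hU hW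
  fin_cases i
  exacts [hp, hU, hW]

theorem exists_affine_coordinate (hU : U ∈ l) (hW : W ∈ l) (hUW : U ≠ W) (hp : p ∈ l)
    (hpW : p ≠ W) : ∃ (a : F) (t : F), a ≠ 0 ∧ p.rep = a • (U.rep + t • W.rep) := by
  have mem_span : p.rep ∈ Submodule.span F (Set.range ![U.rep, W.rep]) := by
    by_contra hspan
    exact not_linearIndependent_of_mem_line hp hU hW (linearIndependent_finCons.2
      ⟨(Projectivization.linearIndependent_pair_iff_ne).2 hUW, hspan⟩)
  obtain ⟨α, β, h⟩ := Submodule.mem_span_pair.1 (by simpa [Set.pair_comm] using mem_span)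
  have hα : α ≠ 0 := by
    rintro rfl
    exact hpW (eq_of_smul_rep_eq (by simpa using h))
  refine ⟨α, α⁻¹ * β, hα, ?_⟩
  rw [smul_add, smul_smul, mul_inv_cancel_left₀ hα, h]

/-- The line `l` passes through `p` and is tangent there to the curve `f = 0`, or `p` is a singular
point of that curve. -/
def IsTangentAt (f : MvPolynomial (Fin 3) F) (p l : ℙ F (Fin 3 → F)) : Prop :=
  p ∈ l ∧ ∃ c : F, formalGradient f p.rep = c • l.rep

theorem exists_isTangentAt [Finite F] (hf : f.IsHomogeneous n) (hp : eval p.rep f = 0) :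
    ∃ l, IsTangentAt f p l := by
  by_cases hg : formalGradient f p.rep = 0
  · obtain ⟨l, hl⟩ := exists_mem_line p
    exact ⟨l, hl, 0, by rw [hg, zero_smul]⟩
  obtain ⟨a, ha⟩ := Projectivization.exists_smul_eq_mk_rep F _ hg
  refine ⟨.mk F _ hg, ?_, (a⁻¹ : Fˣ), ?_⟩
  · rw [mem_iff_dotProduct_rep_eq_zero, ← ha, smul_dotProduct, formalGradient_dotProduct_self hf,
      hp, mul_zero, smul_zero]
  · rw [← ha, ← Units.smul_def, inv_smul_smul]

theorem card_projectivePlane [Finite F] :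
    Nat.card (ℙ F (Fin 3 → F)) = Nat.card F ^ 2 + Nat.card F + 1 := by
  rw [Projectivization.card_of_finrank F (Fin 3 → F) (Module.finrank_fin_fun F)]
  simp only [Finset.sum_range_succ, Finset.sum_range_zero]
  ring

theorem order_eq_card [Finite F] [DecidableEq F] :
    order (ℙ F (Fin 3 → F)) (ℙ F (Fin 3 → F)) = Nat.card F := by
  have := Fintype.ofFinite (ℙ F (Fin 3 → F))
  have card_points := card_points (ℙ F (Fin 3 → F)) (ℙ F (Fin 3 → F))
  rw [← Nat.card_eq_fintype_card, card_projectivePlane] at card_points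
  nlinarith

/-- The curve `f = 0` contains every rational point of the line `l`. -/
def VanishesOnLine (f : MvPolynomial (Fin 3) F) (l : ℙ F (Fin 3 → F)) : Prop :=
  ∀ p ∈ l, eval p.rep f = 0

theorem one_lt_rootMultiplicity_restrictLine (hf : f.IsHomogeneous n) (hW : W ∈ l)
    (hne : restrictLine U.rep W.rep f ≠ 0) {a t : F} (ha : a ≠ 0)
    (hpt : p.rep = a • (U.rep + t • W.rep)) (hp : eval p.rep f = 0) (htan : IsTangentAt f p l) :
    1 < (restrictLine U.rep W.rep f).rootMultiplicity t := by
  obtain ⟨-, c, hc⟩ := htan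
  have point_eq : U.rep + t • W.rep = a⁻¹ • p.rep := by rw [hpt, inv_smul_smul₀ ha]
  refine (Polynomial.one_lt_rootMultiplicity_iff_isRoot hne).2 ⟨?_, ?_⟩
  · rw [Polynomial.IsRoot, eval_restrictLine, point_eq, eval_smul_of_isHomogeneous hf, hp, mul_zero]
  · have derivative_eq : (restrictLine U.rep W.rep f).derivative.eval t =
        formalGradient f (U.rep + t • W.rep) ⬝ᵥ W.rep := by
      simp [derivative_restrictLine, Polynomial.eval_finsetSum, eval_restrictLine, dotProduct,
        formalGradient]
    rw [Polynomial.IsRoot, derivative_eq, point_eq, formalGradient_smul_of_isHomogeneous hf, hc,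
      smul_dotProduct, smul_dotProduct, mem_iff_dotProduct_rep_eq_zero.1 hW, smul_zero, smul_zero]

section Finite

variable [Finite F]

/-- The rational points of the plane curve `f = 0`. -/
def rationalPoints (f : MvPolynomial (Fin 3) F) : Finset (ℙ F (Fin 3 → F)) :=
  (Set.toFinite {p | eval p.rep f = 0}).toFinset

@[simp]
theorem mem_rationalPoints : p ∈ rationalPoints f ↔ eval p.rep f = 0 := by simp [rationalPoints]

open Classical in
theorem secantNumber_add_tangencyNumber_le (hf : f.IsHomogeneous n) (hl : ¬VanishesOnLine f l) :
    secantNumber (rationalPoints f) l + tangencyNumber (rationalPoints f) (IsTangentAt f) l ≤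
      n := by
  obtain ⟨W, hWl, hW⟩ : ∃ W ∈ l, eval W.rep f ≠ 0 := by simpa [VanishesOnLine] using hl
  obtain ⟨U, hUl, hUW⟩ := exists_mem_line_ne l W
  set h := restrictLine U.rep W.rep f with h_def
  have h_ne : h ≠ 0 := fun h0 => hW (by rw [← coeff_restrictLine hf U.rep, ← h_def, h0]; simp)
  set S := {p ∈ rationalPoints f | p ∈ l} with S_def
  have coordinate (p : ℙ F (Fin 3 → F)) (hp : p ∈ S) :
      ∃ a t : F, a ≠ 0 ∧ p.rep = a • (U.rep + t • W.rep) := by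
    simp only [S, Finset.mem_filter, mem_rationalPoints] at hp
    exact exists_affine_coordinate hUl hWl hUW hp.2 fun hpW => hW (hpW ▸ hp.1)
  choose! a t ha ht using coordinate
  have t_inj : Set.InjOn t S := fun p hp p' hp' hpp' => eq_of_smul_rep_eq (a := a p * (a p')⁻¹) (by
    rw [ht p hp, ht p' hp', hpp', mul_smul, inv_smul_smul₀ (ha p' hp')])
  have multiplicity (p : ℙ F (Fin 3 → F)) (hp : p ∈ S) :
      (1 + if IsTangentAt f p l then 1 else 0) ≤ h.roots.count (t p) := by
    have hfp : eval p.rep f = 0 := mem_rationalPoints.1 (Finset.mem_filter.1 hp).1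
    rw [Polynomial.count_roots]
    split_ifs with htan
    · exact one_lt_rootMultiplicity_restrictLine hf hWl h_ne (ha p hp) (ht p hp) hfp htan
    · refine (Polynomial.rootMultiplicity_pos h_ne).2 ?_
      rw [ht p hp, eval_smul_of_isHomogeneous hf, mul_eq_zero_iff_left (pow_ne_zero n (ha p hp))]
        at hfp
      rw [Polynomial.IsRoot, eval_restrictLine, hfp]
  calc secantNumber (rationalPoints f) l + tangencyNumber (rationalPoints f) (IsTangentAt f) l
    _ = ∑ p ∈ S, (1 + if IsTangentAt f p l then 1 else 0) := by
        rw [Finset.sum_add_distrib, ← Finset.card_eq_sum_ones, ← Finset.card_filter, S_def,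
          Finset.filter_filter, secantNumber, tangencyNumber]
        congr! 3
        exact (and_iff_right_of_imp And.left).symm
    _ ≤ ∑ p ∈ S, h.roots.count (t p) := Finset.sum_le_sum multiplicity
    _ = ∑ s ∈ S.image t, h.roots.count s :=
        (Finset.sum_image (f := fun s => h.roots.count s) t_inj).symm
    _ ≤ ∑ s ∈ S.image t ∪ h.roots.toFinset, h.roots.count s :=
        Finset.sum_le_sum_of_subset Finset.subset_union_left
    _ = h.roots.card := Multiset.sum_count_eq_card fun s hs =>
        Finset.mem_union_right _ (Multiset.mem_toFinset.2 hs)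
    _ ≤ n := h.card_roots'.trans (natDegree_restrictLine_le hf _ _)

theorem isTangency_isTangentAt (hf : f.IsHomogeneous n) (hl : ∀ l, ¬VanishesOnLine f l) :
    IsTangency (rationalPoints f) n (IsTangentAt f) where
  exists_tangent _ hp := exists_isTangentAt hf (mem_rationalPoints.1 hp)
  mem_of_tangent _ _ _ := And.left
  bezout l := secantNumber_add_tangencyNumber_le hf (hl l)

theorem two_mul_card_rationalPoints_add_le (hf : f.IsHomogeneous n) (hn : 0 < n)
    (hl : ∀ l, ¬VanishesOnLine f l) :
    2 * (#(rationalPoints f) + Nat.card F) ≤ n * (2 * Nat.card F + 1) := by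
  classical
  rw [← order_eq_card (F := F)]
  exact (isTangency_isTangentAt hf hl).two_mul_card_add_order_le hn

end Finite

end Projective

end PlaneCurves

section LineComponents

open Configuration Configuration.ProjectivePlane Matrix
open scoped Finset LinearAlgebra.Projectivization

section LinearForm

variable {σ R : Type*} [CommRing R]

theorem homogeneousComponent_mul_of_left {m n : ℕ} {f g : MvPolynomial σ R}
    (hf : f.IsHomogeneous m) :
    homogeneousComponent (m + n) (f * g) = f * homogeneousComponent n g := by
  let : GradedAlgebra (homogeneousSubmodule σ R) := gradedAlgebra
  have := DirectSum.coe_decompose_mul_add_of_left_mem (homogeneousSubmodule σ R) (b := g) (j := n)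
    ((mem_homogeneousSubmodule m f).2 hf)
  rwa [← decomposition.decompose'_apply, ← decomposition.decompose'_apply]

theorem exists_isHomogeneous_eq_mul {m n : ℕ} {f g : MvPolynomial σ R}
    (hf : f.IsHomogeneous (m + n)) (hg : g.IsHomogeneous m) (hgf : g ∣ f) :
    ∃ h : MvPolynomial σ R, h.IsHomogeneous n ∧ f = g * h := by
  obtain ⟨h, rfl⟩ := hgf
  exact ⟨homogeneousComponent n h, homogeneousComponent_isHomogeneous n h,
    by rw [← homogeneousComponent_mul_of_left hg, homogeneousComponent_eq_self hf]⟩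

variable [Fintype σ]

/-- The linear form with coefficient vector `a`. -/
def linearForm (a : σ → R) : MvPolynomial σ R := ∑ i, C (a i) * X i

theorem isHomogeneous_linearForm (a : σ → R) : (linearForm a).IsHomogeneous 1 :=
  .sum _ _ _ fun i _ => isHomogeneous_C_mul_X (a i) i

theorem aeval_linearForm {S : Type*} [CommRing S] [Algebra R S] (a : σ → R) (s : σ → S) :
    aeval s (linearForm a) = ∑ i, a i • s i := by
  simp [linearForm, Algebra.smul_def]

theorem eval_linearForm (a x : σ → R) : eval x (linearForm a) = a ⬝ᵥ x := by
  simp [linearForm, dotProduct]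

theorem linearForm_ne_zero {a : σ → R} (ha : a ≠ 0) : linearForm a ≠ 0 := by
  intro h
  exact ha (dotProduct_eq_zero a fun x => by rw [← eval_linearForm, h, map_zero])

variable {F : Type*} [Field F] {n : ℕ} {f : MvPolynomial σ F} {a : σ → F}

theorem linearForm_dvd (hf : f.IsHomogeneous n) (hn : n ≤ Cardinal.mk F) (ha : a ≠ 0)
    (hfa : ∀ x, a ⬝ᵥ x = 0 → eval x f = 0) : linearForm a ∣ f := by
  classical
  obtain ⟨j, hj : a j ≠ 0⟩ := Function.ne_iff.1 ha
  obtain ⟨e, he⟩ : ∃ e, a ⬝ᵥ e = 1 := ⟨Pi.single j (a j)⁻¹, by simp [hj]⟩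
  -- the projection along `e` onto the hyperplane, which is the identity modulo its equation
  set s : σ → MvPolynomial σ F := fun i => X i - C (e i) * linearForm a
  have dotProduct_eval_s (x : σ → F) : a ⬝ᵥ (fun i => eval x (s i)) = 0 := by
    have : (fun i => eval x (s i)) = x - (a ⬝ᵥ x) • e := by
      ext i
      simp [s, eval_linearForm, mul_comm]
    rw [this, dotProduct_sub, dotProduct_smul, he, smul_eq_mul, mul_one, sub_self]
  have aeval_s_eq_zero : aeval s f = 0 := by
    have hs (i : σ) : (s i).IsHomogeneous 1 :=
      (isHomogeneous_X F i).sub ((isHomogeneous_linearForm a).C_mul _)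
    refine (hf.aeval s hs).eq_zero_of_forall_eval_eq_zero_of_le_card (fun x => ?_)
      (by rwa [one_mul])
    have := hfa _ (dotProduct_eval_s x)
    rwa [← MvPolynomial.coe_aeval_eq_eval, RingHom.coe_coe, comp_aeval_apply]
  have mk_comp : (Ideal.Quotient.mkₐ F (Ideal.span {linearForm a})).comp (aeval s) =
      Ideal.Quotient.mkₐ F (Ideal.span {linearForm a}) := by
    ext i
    simp only [AlgHom.comp_apply, aeval_X, Ideal.Quotient.mkₐ_eq_mk, s, map_sub, map_mul,
      Ideal.Quotient.mk_singleton_self, mul_zero, sub_zero]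
  have := DFunLike.congr_fun mk_comp f
  rwa [AlgHom.comp_apply, aeval_s_eq_zero, map_zero, eq_comm, Ideal.Quotient.mkₐ_eq_mk,
    Ideal.Quotient.eq_zero_iff_dvd] at this

end LinearForm

section Plane

variable {F : Type*} [Field F] {n : ℕ} {f g : MvPolynomial (Fin 3) F} {p l m : ℙ F (Fin 3 → F)}

theorem eval_linearForm_rep_eq_zero_iff : eval p.rep (linearForm l.rep) = 0 ↔ p ∈ l := by
  rw [eval_linearForm, mem_iff_dotProduct_rep_eq_zero]

theorem VanishesOnLine.eval_eq_zero (hl : VanishesOnLine f l) (hf : f.IsHomogeneous (1 + n))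
    {x : Fin 3 → F} (hx : l.rep ⬝ᵥ x = 0) : eval x f = 0 := by
  obtain rfl | hx0 := eq_or_ne x 0
  · simpa using eval_smul_of_isHomogeneous hf 0 0
  · refine (eval_rep_mk_eq_zero_iff hf hx0).1 (hl _ ?_)
    obtain ⟨a, ha⟩ := Projectivization.exists_smul_eq_mk_rep F x hx0
    rw [mem_iff_dotProduct_rep_eq_zero, ← ha, dotProduct_smul, hx, smul_zero]

variable [Finite F]

theorem VanishesOnLine.exists_eq_linearForm_mul (hl : VanishesOnLine f l)
    (hf : f.IsHomogeneous (1 + n)) (hn : 1 + n ≤ Nat.card F) :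
    ∃ g : MvPolynomial (Fin 3) F, g.IsHomogeneous n ∧ f = linearForm l.rep * g :=
  exists_isHomogeneous_eq_mul hf (isHomogeneous_linearForm _) <|
    linearForm_dvd hf (by rw [← Nat.cast_card]; exact_mod_cast hn) l.rep_nonzero
      fun _ => hl.eval_eq_zero hf

theorem exists_mem_and_mem (l m : ℙ F (Fin 3 → F)) : ∃ W, W ∈ l ∧ W ∈ m := by
  classical
  obtain rfl | hlm := eq_or_ne l m
  · exact (exists_mem_line_ne l l).imp fun W hW => ⟨hW.1, hW.1⟩
  · exact ⟨HasPoints.mkPoint hlm, HasPoints.mkPoint_ax hlm⟩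

theorem card_rationalPoints_linearForm :
    #(rationalPoints (linearForm l.rep)) = Nat.card F + 1 := by
  classical
  have := Fintype.ofFinite (ℙ F (Fin 3 → F))
  rw [← order_eq_card, ← secantNumber_univ l, secantNumber]
  congr 1
  ext p
  simp [eval_linearForm_rep_eq_zero_iff]

theorem card_rationalPoints_linearForm_mul_le :
    #(rationalPoints (linearForm l.rep * g)) ≤ #(rationalPoints g) + (Nat.card F + 1) := by
  classical
  rw [← card_rationalPoints_linearForm (l := l)]
  refine (Finset.card_le_card fun p hp => ?_).trans (Finset.card_union_le _ _)
  simpa [or_comm] using hp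

theorem card_rationalPoints_linearForm_mul_le_of_vanishesOnLine (hm : VanishesOnLine g m) :
    #(rationalPoints (linearForm l.rep * g)) ≤ #(rationalPoints g) + Nat.card F := by
  classical
  obtain ⟨W, hWl, hWm⟩ := exists_mem_and_mem l m
  have hW : W ∈ rationalPoints (linearForm l.rep) :=
    mem_rationalPoints.2 (eval_linearForm_rep_eq_zero_iff.2 hWl)
  rw [← Nat.add_sub_cancel (n := Nat.card F) (m := 1), ← card_rationalPoints_linearForm (l := l),
    ← Finset.card_erase_of_mem hW]
  refine (Finset.card_le_card fun p hp => ?_).trans (Finset.card_union_le _ _)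
  obtain rfl | hpW := eq_or_ne p W
  · exact Finset.mem_union_left _ (mem_rationalPoints.2 (hm p hWm))
  · simpa [or_comm, hpW] using hp

end Plane

end LineComponents

section SemilinearEquation

open Matrix

variable {p : ℕ} [Fact p.Prime] {F : Type*} [Field F] [CharP F p] {n : Type*}

theorem sum_smul_pow_char {ι : Type*} [Fintype ι] (c : ι → F) (b : ι → n → F) :
    (∑ i, c i • b i) ^ p = ∑ i, c i ^ p • b i ^ p := by
  ext j
  simp [Finset.sum_apply, sum_pow_char, mul_pow]

variable [PerfectRing F p] [Fintype n] {M : Matrix n n F}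

theorem pow_eq_self_of_mulVec_sum_eq_pow {ι : Type*} [Fintype ι] {b : ι → n → F}
    (hb : LinearIndependent F b) (hMb : ∀ i, M *ᵥ b i = b i ^ p) {c : ι → F}
    (hc : M *ᵥ (∑ i, c i • b i) = (∑ i, c i • b i) ^ p) (i : ι) : c i ^ p = c i := by
  obtain ⟨d, hd⟩ : ∃ d : ι → F, ∀ i, d i ^ p = c i - c i ^ p :=
    Classical.skolem.1 fun i => (frobeniusEquiv F p).surjective _
  have sum_pow_eq_zero : (∑ i, d i • b i) ^ p = 0 := by
    simp_rw [mulVec_sum, mulVec_smul, hMb, sum_smul_pow_char] at hc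
    simp_rw [sum_smul_pow_char, hd, sub_smul, Finset.sum_sub_distrib, hc, sub_self]
  have d_eq_zero : d i = 0 :=
    Fintype.linearIndependent_iff.1 hb d (eq_zero_of_pow_eq_zero sum_pow_eq_zero) i
  rw [eq_comm, ← sub_eq_zero, ← hd, d_eq_zero, zero_pow (NeZero.ne p)]

theorem ncard_mulVec_eq_pow_le (p : ℕ) [Fact p.Prime] [CharP F p] [PerfectRing F p]
    (M : Matrix n n F) : {v : n → F | M *ᵥ v = v ^ p}.ncard ≤ p ^ Fintype.card n := by
  obtain ⟨b, hbS, hspan, hli⟩ := exists_linearIndependent F {v : n → F | M *ᵥ v = v ^ p}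
  have := hli.setFinite.fintype
  have := Subfield.fintypeBot F p
  let combination (c : b → (⊥ : Subfield F)) : n → F := ∑ i, (c i : F) • (i : n → F)
  have subset_range : {v : n → F | M *ᵥ v = v ^ p} ⊆ Set.range combination := by
    intro v hv
    have mem_span : v ∈ Submodule.span F (Set.range ((↑) : b → n → F)) := by
      rw [Subtype.range_val, hspan]
      exact Submodule.subset_span hv
    obtain ⟨c, rfl⟩ := (Submodule.mem_span_range_iff_exists_fun F).1 mem_span
    have hc := pow_eq_self_of_mulVec_sum_eq_pow hli (fun i => hbS i.2) hv
    exact ⟨fun i => ⟨c i, (Subfield.mem_bot_iff_pow_eq_self F p).2 (hc i)⟩, rfl⟩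
  calc {v : n → F | M *ᵥ v = v ^ p}.ncard ≤ (Set.range combination).ncard :=
        Set.ncard_le_ncard subset_range (Set.finite_range _)
    _ ≤ Nat.card (b → (⊥ : Subfield F)) := Finite.card_range_le combination
    _ = p ^ Fintype.card b := by
        rw [Nat.card_fun, Subfield.card_bot F p, Nat.card_eq_fintype_card]
    _ ≤ p ^ Fintype.card n := by
        refine Nat.pow_le_pow_right (Fact.out : p.Prime).pos ?_
        simpa using hli.fintype_card_le_finrank

end SemilinearEquation

section QuarticsInCharTwo

open Configuration Configuration.ProjectivePlane Matrix
open scoped Finset LinearAlgebra.Projectivization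

section Gradient

theorem exists_eq_single_add_of_degree_eq {σ : Type*} {n : ℕ} {d : σ →₀ ℕ} (hd : d.degree = n + 1) :
    ∃ i e, d = Finsupp.single i 1 + e ∧ e.degree = n := by
  obtain ⟨i, hi⟩ : ∃ i, d i ≠ 0 := by
    by_contra! h
    have : d = 0 := Finsupp.ext h
    simp [this] at hd
  have le : Finsupp.single i 1 ≤ d := Finsupp.single_le_iff.2 (Nat.one_le_iff_ne_zero.2 hi)
  refine ⟨i, d - Finsupp.single i 1, (add_tsub_cancel_of_le le).symm, ?_⟩
  have := congr_arg Finsupp.degree (add_tsub_cancel_of_le le)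
  rw [map_add, Finsupp.degree_single, hd] at this
  omega

theorem exists_eq_single_two_add {d : Fin 3 →₀ ℕ} (hd : d.degree = 4) :
    ∃ i j k, d = Finsupp.single i 2 + (Finsupp.single j 1 + Finsupp.single k 1) := by
  obtain ⟨i, hi⟩ : ∃ i, 2 ≤ d i := by
    by_contra! h
    have := Finset.sum_le_sum fun i (_ : i ∈ Finset.univ) => Nat.le_of_lt_succ (h i)
    rw [← Finsupp.degree_eq_sum, hd] at this
    simp at this
  have le : Finsupp.single i 2 ≤ d := Finsupp.single_le_iff.2 hi
  have degree_sub : (d - Finsupp.single i 2).degree = 2 := by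
    have := congr_arg Finsupp.degree (add_tsub_cancel_of_le le)
    rw [map_add, Finsupp.degree_single, hd] at this
    omega
  obtain ⟨j, e, he, hed⟩ := exists_eq_single_add_of_degree_eq degree_sub
  obtain ⟨k, e', rfl, he'⟩ := exists_eq_single_add_of_degree_eq hed
  rw [Finsupp.degree_eq_zero_iff] at he'
  exact ⟨i, j, k, by rw [← add_zero (Finsupp.single k 1), ← he', ← he, add_tsub_cancel_of_le le]⟩

variable {R : Type*} [CommRing R] [CharP R 2]

theorem formalGradient_X_sq_mul_X_mul_X (i j k : Fin 3) (x : Fin 3 → R) :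
    formalGradient (X i ^ 2 * (X j * X k)) x =
      (vecMulVec (Pi.single j 1 ⨯₃ Pi.single k 1) (Pi.single i 1) *ᵥ x ^ 2) ⨯₃ x := by
  have formalGradient_X_sq : formalGradient (X i ^ 2) x = 0 := by
    rw [sq, formalGradient_mul, ← two_smul R, CharTwo.two_eq_zero, zero_smul]
  have gradient_eq : formalGradient (X i ^ 2 * (X j * X k)) x =
      x i ^ 2 • (x j • Pi.single k 1 + x k • Pi.single j 1) := by
    rw [formalGradient_mul, formalGradient_X_sq, smul_zero, add_zero, formalGradient_mul,
      formalGradient_X, formalGradient_X, map_pow, eval_X, eval_X, eval_X]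
  rw [gradient_eq, vecMulVec_mulVec, op_smul_eq_smul, map_smul, LinearMap.smul_apply,
    cross_cross_eq_smul_sub_smul, CharTwo.sub_eq_add]
  simp

theorem exists_formalGradient_eq_cross {f : MvPolynomial (Fin 3) R} (hf : f.IsHomogeneous 4) :
    ∃ A : Matrix (Fin 3) (Fin 3) R, ∀ x, formalGradient f x = (A *ᵥ x ^ 2) ⨯₃ x := by
  have of_degree (d : Fin 3 →₀ ℕ) (hd : d ∈ f.support) : ∃ A : Matrix (Fin 3) (Fin 3) R,
      ∀ x, formalGradient (monomial d (coeff d f)) x = (A *ᵥ x ^ 2) ⨯₃ x := by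
    obtain ⟨i, j, k, hijk⟩ := exists_eq_single_two_add (hf.degree_eq_sum_deg_support hd).symm
    have monomial_eq : monomial d (coeff d f) = C (coeff d f) * (X i ^ 2 * (X j * X k)) := by
      simp only [X, monomial_pow, monomial_mul, C_mul_monomial, ← hijk, mul_one, one_pow,
        Finsupp.smul_single, smul_eq_mul]
    refine ⟨coeff d f • vecMulVec (Pi.single j 1 ⨯₃ Pi.single k 1) (Pi.single i 1), fun x => ?_⟩
    rw [monomial_eq, formalGradient_C_mul, formalGradient_X_sq_mul_X_mul_X, smul_mulVec, map_smul,
      LinearMap.smul_apply]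
  choose! A hA using of_degree
  refine ⟨∑ d ∈ f.support, A d, fun x => ?_⟩
  rw [sum_mulVec, map_sum, LinearMap.sum_apply, ← Finset.sum_congr rfl fun d hd => hA d hd x,
    ← formalGradient_sum, support_sum_monomial_coeff]

end Gradient

section Bitangent

variable {F : Type*} [Field F] {f : MvPolynomial (Fin 3) F} {A : Matrix (Fin 3) (Fin 3) F}
  {p p' l : ℙ F (Fin 3 → F)}

theorem exists_eq_smul_of_cross_eq_zero {x y : Fin 3 → F} (hx : x ≠ 0) (h : y ⨯₃ x = 0) :
    ∃ c : F, y = c • x := by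
  by_contra! hne
  exact crossProduct_ne_zero_iff_linearIndependent.2
    (linearIndependent_fin2.2 ⟨hx, fun c => (hne c).symm⟩) h

theorem IsTangentAt.dotProduct_eq_zero (hA : ∀ x, formalGradient f x = (A *ᵥ x ^ 2) ⨯₃ x)
    (h : IsTangentAt f p l) : (l.rep ᵥ* A) ⬝ᵥ p.rep ^ 2 = 0 := by
  obtain ⟨hpl, c, hc⟩ := h
  rw [hA] at hc
  rw [← dotProduct_mulVec]
  obtain rfl | hc0 := eq_or_ne c 0
  · obtain ⟨s, hs⟩ := exists_eq_smul_of_cross_eq_zero p.rep_nonzero (hc.trans (zero_smul F _))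
    rw [hs, dotProduct_smul, mem_iff_dotProduct_rep_eq_zero.1 hpl, smul_zero]
  · have := dot_self_cross (A *ᵥ p.rep ^ 2) p.rep
    rwa [hc, dotProduct_smul, smul_eq_mul, mul_eq_zero_iff_left hc0, dotProduct_comm] at this

theorem cross_sq [CharP F 2] (x y : Fin 3 → F) : (x ^ 2) ⨯₃ (y ^ 2) = (x ⨯₃ y) ^ 2 := by
  ext i
  fin_cases i <;> simp [cross_apply, sub_pow_char, mul_pow]

theorem dotProduct_sq [CharP F 2] (x y : Fin 3 → F) : (x ^ 2) ⬝ᵥ (y ^ 2) = (x ⬝ᵥ y) ^ 2 := by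
  simp [dotProduct, sum_pow_char, mul_pow]

theorem exists_vecMul_eq_smul_sq [CharP F 2]
    (hA : ∀ x, formalGradient f x = (A *ᵥ x ^ 2) ⨯₃ x) (hpp' : p ≠ p')
    (hp : IsTangentAt f p l) (hp' : IsTangentAt f p' l) : ∃ c : F, l.rep ᵥ* A = c • l.rep ^ 2 := by
  have line_sq_dotProduct {p : ℙ F (Fin 3 → F)} (hpl : p ∈ l) : l.rep ^ 2 ⬝ᵥ p.rep ^ 2 = 0 := by
    rw [dotProduct_sq, mem_iff_dotProduct_rep_eq_zero.1 hpl, zero_pow two_ne_zero]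
  have points_sq_cross : p.rep ^ 2 ⨯₃ p'.rep ^ 2 ≠ 0 := by
    rw [cross_sq]
    exact pow_ne_zero 2 (crossProduct_ne_zero_iff_linearIndependent.2
      (Projectivization.linearIndependent_pair_iff_ne.2 hpp'))
  exact exists_eq_smul_of_cross_eq_zero (pow_ne_zero 2 l.rep_nonzero)
    ((ofField.crossProduct_eq_zero_of_dotProduct_eq_zero (hp.dotProduct_eq_zero hA)
      (line_sq_dotProduct hp.1) (hp'.dotProduct_eq_zero hA)
      (line_sq_dotProduct hp'.1)).resolve_right points_sq_cross)

end Bitangent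

section Counting

variable {F : Type*} [Field F] {A : Matrix (Fin 3) (Fin 3) F} {f : MvPolynomial (Fin 3) F}

theorem exists_forall_mem_of_vecMul_eq_zero (hA : A ≠ 0) :
    ∃ R : ℙ F (Fin 3 → F), ∀ l : ℙ F (Fin 3 → F), l.rep ᵥ* A = 0 → R ∈ l := by
  obtain ⟨j, hj⟩ := Function.ne_iff.1 (transpose_eq_zero.not.2 hA)
  obtain ⟨a, ha⟩ := Projectivization.exists_smul_eq_mk_rep F (Aᵀ j) hj
  refine ⟨.mk F (Aᵀ j) hj, fun l hl => ?_⟩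
  rw [mem_iff_dotProduct_rep_eq_zero, ← ha, dotProduct_smul, show l.rep ⬝ᵥ Aᵀ j = 0 from
    congr_fun hl j, smul_zero]

theorem ncard_vecMul_eq_smul_sq_lt [Finite F] [CharP F 2] (A : Matrix (Fin 3) (Fin 3) F) :
    {l : ℙ F (Fin 3 → F) | ∃ c : F, c ≠ 0 ∧ l.rep ᵥ* A = c • l.rep ^ 2}.ncard < 2 ^ 3 := by
  have solution (l : ℙ F (Fin 3 → F)) (hl : ∃ c : F, c ≠ 0 ∧ l.rep ᵥ* A = c • l.rep ^ 2) :
      ∃ c : F, c ≠ 0 ∧ Aᵀ *ᵥ (c • l.rep) = (c • l.rep) ^ 2 := by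
    obtain ⟨c, hc, h⟩ := hl
    exact ⟨c, hc, by rw [mulVec_smul, mulVec_transpose, h, smul_pow, sq c, mul_smul]⟩
  choose! c hc hsol using solution
  have zero_sol : (0 : Fin 3 → F) ∈ {v : Fin 3 → F | Aᵀ *ᵥ v = v ^ 2} := by simp
  calc {l : ℙ F (Fin 3 → F) | ∃ c : F, c ≠ 0 ∧ l.rep ᵥ* A = c • l.rep ^ 2}.ncard
    _ ≤ ({v : Fin 3 → F | Aᵀ *ᵥ v = v ^ 2} \ {0}).ncard := by
        refine Set.ncard_le_ncard_of_injOn (fun l => c l • l.rep)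
          (fun l hl => ⟨hsol l hl, smul_ne_zero (hc l hl) l.rep_nonzero⟩) fun l hl m _ h => ?_
        have h : c l • l.rep = c m • m.rep := h
        exact eq_of_smul_rep_eq (a := (c l)⁻¹ * c m)
          (by rw [mul_smul, ← h, inv_smul_smul₀ (hc l hl)])
    _ < {v : Fin 3 → F | Aᵀ *ᵥ v = v ^ 2}.ncard := Set.ncard_sdiff_singleton_lt_of_mem zero_sol
    _ ≤ 2 ^ 3 := by simpa using ncard_mulVec_eq_pow_le 2 Aᵀ

variable [Finite F]

theorem charP_two_and_eight_le_of_two_dvd_card (h : 2 ∣ Nat.card F) (hq : 5 ≤ Nat.card F) :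
    CharP F 2 ∧ 8 ≤ Nat.card F := by
  have := Fintype.ofFinite F
  rw [Nat.card_eq_fintype_card] at *
  have : CharP F 2 := ringChar.of_eq
    (FiniteField.even_card_iff_char_two.2 (Nat.mod_eq_zero_of_dvd h))
  obtain ⟨n, -, hn⟩ := FiniteField.card F 2
  refine ⟨this, ?_⟩
  have three_le : 3 ≤ (n : ℕ) := by
    by_contra! hlt
    interval_cases (n : ℕ) <;> omega
  rw [hn]
  exact Nat.pow_le_pow_right two_pos three_le

open Classical in
theorem exists_card_lt_card_filter_mem_add [CharP F 2] (hA : A ≠ 0) {B : Finset (ℙ F (Fin 3 → F))}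
    (hB : ∀ l ∈ B, ∃ c : F, l.rep ᵥ* A = c • l.rep ^ 2) :
    ∃ R : ℙ F (Fin 3 → F), #B < #{l ∈ B | R ∈ l} + 2 ^ 3 := by
  obtain ⟨R, hR⟩ := exists_forall_mem_of_vecMul_eq_zero hA
  refine ⟨R, ?_⟩
  rw [← Finset.card_filter_add_card_filter_not (s := B) (R ∈ ·), Nat.add_lt_add_iff_left,
    ← Set.ncard_coe_finset]
  refine (Set.ncard_le_ncard fun l hl => ?_).trans_lt (ncard_vecMul_eq_smul_sq_lt A)
  obtain ⟨hlB, hRl⟩ := Finset.mem_filter.1 hl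
  obtain ⟨c, hc⟩ := hB l hlB
  refine ⟨c, ?_, hc⟩
  rintro rfl
  exact hRl (hR l (hc.trans (zero_smul F _)))

open Classical in
theorem exists_card_bitangents_lt [CharP F 2] [Fintype (ℙ F (Fin 3 → F))] (hf : f.IsHomogeneous 4)
    (h : IsTangency (rationalPoints f) (2 * 2) (IsTangentAt f))
    (hK : #(rationalPoints f) + Nat.card F + 2 = 2 * 2 * (Nat.card F + 1)) :
    ∃ R : ℙ F (Fin 3 → F), #{l : ℙ F (Fin 3 → F) | secantNumber (rationalPoints f) l = 2} <
      #{l ∈ pencil (ℙ F (Fin 3 → F)) R | secantNumber (rationalPoints f) l = 2} + 2 ^ 3 := by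
  rw [← order_eq_card (F := F)] at hK
  obtain ⟨A, hA⟩ := exists_formalGradient_eq_cross hf
  have A_ne_zero : A ≠ 0 := by
    rintro rfl
    obtain ⟨p, hp⟩ : (rationalPoints f).Nonempty := Finset.card_pos.1 (by omega)
    have tangent_iff (l : ℙ F (Fin 3 → F)) : IsTangentAt f p l ↔ p ∈ l :=
      and_iff_left ⟨0, by rw [hA, zero_mulVec, map_zero, LinearMap.zero_apply, zero_smul]⟩
    have tangents := h.card_tangents_eq_one two_pos hK hp
    simp_rw [tangent_iff] at tangents
    have := card_pencil (L := ℙ F (Fin 3 → F)) p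
    rw [pencil, tangents] at this
    have := one_lt_order (ℙ F (Fin 3 → F)) (ℙ F (Fin 3 → F))
    omega
  have vecMul_bitangent (l : ℙ F (Fin 3 → F)) (hl : secantNumber (rationalPoints f) l = 2) :
      ∃ c : F, l.rep ᵥ* A = c • l.rep ^ 2 := by
    have one_lt_tangencies : 1 < tangencyNumber (rationalPoints f) (IsTangentAt f) l :=
      (h.tangencyNumber_eq two_pos hK hl).symm ▸ one_lt_two
    obtain ⟨p, hp, p', hp', hpp'⟩ := Finset.one_lt_card.1 one_lt_tangencies
    exact exists_vecMul_eq_smul_sq hA hpp' (Finset.mem_filter.1 hp).2 (Finset.mem_filter.1 hp').2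
  obtain ⟨R, hR⟩ := exists_card_lt_card_filter_mem_add A_ne_zero fun l hl =>
    vecMul_bitangent l (Finset.mem_filter.1 hl).2
  exact ⟨R, by rwa [pencil, Finset.filter_comm]⟩

open Classical in
theorem card_rationalPoints_quartic_add_le (hf : f.IsHomogeneous 4)
    (hl : ∀ l, ¬VanishesOnLine f l) (hq : 5 ≤ Nat.card F) :
    #(rationalPoints f) + Nat.card F ≤ 4 * Nat.card F + 1 := by
  have := Fintype.ofFinite (ℙ F (Fin 3 → F))
  have segre := two_mul_card_rationalPoints_add_le hf four_pos hl
  by_contra! hlt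
  have h : IsTangency (rationalPoints f) (2 * 2) (IsTangentAt f) := isTangency_isTangentAt hf hl
  have hK : #(rationalPoints f) + Nat.card F + 2 = 2 * 2 * (Nat.card F + 1) := by omega
  have hK' := hK
  rw [← order_eq_card (F := F)] at hK'
  have two_dvd := h.dvd_order two_pos hK'
  have card_bitangents := h.mul_card_filter_secantNumber_eq two_pos hK'
  have pencil_le := h.mul_card_filter_pencil_le hK'
  rw [order_eq_card] at two_dvd pencil_le
  obtain ⟨_, eight_le⟩ := charP_two_and_eight_le_of_two_dvd_card two_dvd hq
  obtain ⟨R, hR⟩ := exists_card_bitangents_lt hf h hK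
  have := pencil_le R
  omega

end Counting

end QuarticsInCharTwo

section FormsThroughPoint

open Matrix

theorem linearIndependent_of_pow_card_pow {ι F E : Type*} [Finite ι] [Field F] [Fintype F]
    [Field E] [Algebra F E] {v : ι → E} {e : ι → ℕ}
    (hv : LinearIndependent E fun k i => v i ^ Fintype.card F ^ e k) : LinearIndependent F v := by
  classical
  have := Fintype.ofFinite ι
  rw [Fintype.linearIndependent_iff]
  intro a ha
  have sum_pow_eq_zero (k : ι) : ∑ i, v i ^ Fintype.card F ^ e k * algebraMap F E (a i) = 0 := by
    have hpow (x : E) : (FiniteField.frobeniusAlgHom F E ^ e k) x = x ^ Fintype.card F ^ e k := by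
      rw [AlgHom.coe_pow, FiniteField.coe_frobeniusAlgHom, pow_iterate]
    have := congrArg (FiniteField.frobeniusAlgHom F E ^ e k) ha
    simp only [map_sum (FiniteField.frobeniusAlgHom F E ^ e k), map_smul, map_zero] at this
    simpa only [hpow, Algebra.smul_def, mul_comm] using this
  have := mulVec_injective_of_isUnit (linearIndependent_rows_iff_isUnit.1 hv)
    ((funext sum_pow_eq_zero).trans (mulVec_zero _).symm)
  simpa using congrFun this

variable {σ F E : Type*} [Field F] [Field E] [Algebra F E] {v : σ → E} {n : ℕ}
  {f g : MvPolynomial σ F}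

variable (F v n) in
/-- The space of forms of degree `n` over `F` vanishing at the point with homogeneous
coordinates `v`, which may lie in an extension of `F`. -/
def formsThrough : Submodule F (MvPolynomial σ F) :=
  homogeneousSubmodule σ F n ⊓ LinearMap.ker (aeval (R := F) v).toLinearMap

theorem eq_zero_of_mem_formsThrough_zero (hf : f ∈ formsThrough F v 0) : f = 0 := by
  obtain ⟨hom, haeval⟩ := hf
  obtain ⟨c, rfl⟩ : ∃ c, f = C c := ⟨_, totalDegree_eq_zero_iff_eq_C.1
    (Nat.le_zero.1 (IsHomogeneous.totalDegree_le hom))⟩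
  simpa using haeval

theorem mem_formsThrough_of_linearForm_mul [Fintype σ] (hv : LinearIndependent F v) {a : σ → F}
    (ha : a ≠ 0) (hg : g.IsHomogeneous n) (h : aeval v (linearForm a * g) = 0) :
    g ∈ formsThrough F v n := by
  refine ⟨hg, ?_⟩
  rw [map_mul, aeval_linearForm] at h
  exact (mul_eq_zero.1 h).resolve_left fun h =>
    ha (funext (Fintype.linearIndependent_iff.1 hv a h))

theorem eq_zero_of_mem_formsThrough_one [Finite σ] (hv : LinearIndependent F v)
    (hf : f ∈ formsThrough F v 1) : f = 0 := by
  have := Fintype.ofFinite σ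
  obtain ⟨hom, haeval⟩ := hf
  rw [homogeneousSubmodule_one_eq_span_X, SetLike.mem_coe,
    Submodule.mem_span_range_iff_exists_fun] at hom
  obtain ⟨a, rfl⟩ := hom
  have ha : ∑ i, a i • v i = 0 := by simpa using haeval
  simp [Fintype.linearIndependent_iff.1 hv a ha]

theorem mul_mem_formsThrough {m : ℕ} (hf : f.IsHomogeneous m) (hg : g ∈ formsThrough F v n) :
    f * g ∈ formsThrough F v (m + n) :=
  ⟨hf.mul hg.1, (map_mul (aeval v) f g).trans (mul_eq_zero_of_right _ hg.2)⟩

theorem finrank_homogeneousSubmodule [Fintype σ] (n : ℕ) :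
    Module.finrank F (homogeneousSubmodule σ F n) = (Fintype.card σ).multichoose n := by
  classical
  rw [homogeneousSubmodule_eq_finsupp_supported, ← Sym.card_sym_eq_multichoose,
    ← Nat.card_eq_fintype_card, Nat.card_congr (Sym.equivNatSum σ n)]
  exact Module.finrank_eq_nat_card_basis (basisRestrictSupport F {d : σ →₀ ℕ | d.degree = n})

theorem exists_isHomogeneous_aeval_eq [Finite σ] [Nonempty σ] (hv : LinearIndependent F v)
    (hspan : Submodule.span F (Set.range v) = ⊤) (y : E) :
    ∃ f : MvPolynomial σ F, f.IsHomogeneous (n + 1) ∧ aeval v f = y := by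
  have := Fintype.ofFinite σ
  let i : σ := Classical.arbitrary σ
  have hvi : v i ≠ 0 := hv.ne_zero i
  obtain ⟨c, hc⟩ := (Submodule.mem_span_range_iff_exists_fun F).1
    (hspan ▸ Submodule.mem_top : y / v i ^ n ∈ Submodule.span F (Set.range v))
  refine ⟨X i ^ n * linearForm c, (isHomogeneous_X_pow i n).mul (isHomogeneous_linearForm c), ?_⟩
  rw [map_mul, map_pow, aeval_X, aeval_linearForm, hc, mul_div_cancel₀ _ (pow_ne_zero n hvi)]

theorem finrank_formsThrough_add [Fintype σ] [Nonempty σ] (hv : LinearIndependent F v)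
    (hspan : Submodule.span F (Set.range v) = ⊤) (n : ℕ) :
    Module.finrank F (formsThrough F v (n + 1)) + Fintype.card σ =
      (Fintype.card σ).multichoose (n + 1) := by
  have : Module.Finite F (homogeneousSubmodule σ F (n + 1)) :=
    Module.Finite.iff_fg.2 (homogeneousSubmodule_fg σ F (n + 1))
  let evalAt := (aeval (R := F) v).toLinearMap ∘ₗ (homogeneousSubmodule σ F (n + 1)).subtype
  have range_evalAt : LinearMap.range evalAt = ⊤ := LinearMap.range_eq_top.2 fun y =>
    let ⟨f, hf, hfy⟩ := exists_isHomogeneous_aeval_eq hv hspan y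
    ⟨⟨f, hf⟩, hfy⟩
  have finrank_extension : Module.finrank F E = Fintype.card σ :=
    Module.finrank_eq_card_basis (Module.Basis.mk hv hspan.ge)
  have ker_evalAt : Module.finrank F (formsThrough F v (n + 1)) =
      Module.finrank F (LinearMap.ker evalAt) := by
    rw [LinearMap.ker_comp, ← Submodule.finrank_map_subtype_eq, Submodule.map_comap_subtype,
      formsThrough]
  rw [ker_evalAt, ← finrank_homogeneousSubmodule (F := F),
    ← LinearMap.finrank_range_add_finrank_ker evalAt, range_evalAt, finrank_top,
    finrank_extension, add_comm]

end FormsThroughPoint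

section CurvesThroughPoint

open Configuration Configuration.ProjectivePlane
open scoped Finset LinearAlgebra.Projectivization

variable {F : Type*} [Field F] [Finite F] {n : ℕ} {f g : MvPolynomial (Fin 3) F}

theorem card_rationalPoints_add_le_of_le_four (hf : f.IsHomogeneous n) (hn0 : 0 < n) (hn : n ≤ 4)
    (hl : ∀ l, ¬VanishesOnLine f l) (hq : 5 ≤ Nat.card F) :
    #(rationalPoints f) + Nat.card F ≤ n * Nat.card F + 1 := by
  obtain rfl | hn3 : n = 4 ∨ n ≤ 3 := by omega
  · exact card_rationalPoints_quartic_add_le hf hl hq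
  · have := two_mul_card_rationalPoints_add_le hf hn0 hl
    linarith

theorem card_rationalPoints_prod_linearForm_mul [Fintype (ℙ F (Fin 3 → F))] {R : ℙ F (Fin 3 → F)}
    {A : Finset (ℙ F (Fin 3 → F))} (hA : A.Nonempty) (hAR : A ⊆ pencil _ R)
    (hext : ∀ l ∈ A, secantNumber (rationalPoints g) l = 0) :
    #A * Nat.card F + #(rationalPoints g) <
      #(rationalPoints ((∏ l ∈ A, linearForm l.rep) * g)) := by
  classical
  let U : Finset (ℙ F (Fin 3 → F)) := rationalPoints (∏ l ∈ A, linearForm l.rep)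
  have mem_U {p} : p ∈ U ↔ ∃ l ∈ A, p ∈ l := by
    simp [U, map_prod, Finset.prod_eq_zero_iff, eval_linearForm_rep_eq_zero_iff]
  have disjoint : Disjoint U (rationalPoints g) := Finset.disjoint_left.2 fun p hpU hpg =>
    let ⟨l, hl, hpl⟩ := mem_U.1 hpU
    secantNumber_eq_zero_iff.1 (hext l hl) p hpg hpl
  have union_eq : U ∪ rationalPoints g = rationalPoints ((∏ l ∈ A, linearForm l.rep) * g) := by
    ext p
    simp [U]
  rw [← union_eq, Finset.card_union_of_disjoint disjoint, ← order_eq_card (F := F)]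
  exact Nat.add_lt_add_right
    (card_mul_order_lt_card hA hAR fun l hl p hp => mem_U.2 ⟨l, hl, hp⟩) _

theorem card_pow_le_card_ker {V : Type*} [AddCommGroup V] [Module F V] {d : ℕ}
    (hV : Module.finrank F V = d + 1) (φ : V →ₗ[F] F) :
    Nat.card F ^ d ≤ Nat.card (LinearMap.ker φ) := by
  have : Module.Finite F V := Module.finite_of_finrank_pos (by omega)
  have rank_nullity := φ.finrank_range_add_finrank_ker
  have finrank_range_le := (LinearMap.range φ).finrank_le
  rw [Module.finrank_self] at finrank_range_le
  rw [Module.natCard_eq_pow_finrank (K := F) (V := φ.ker)]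
  exact Nat.pow_le_pow_right (Nat.card_pos (α := F)) (by omega)

theorem exists_lt_card_rationalPoints {W : Submodule F (MvPolynomial (Fin 3) F)}
    (hW : Module.finrank F W = 3) : ∃ g ∈ W, g ≠ 0 ∧ Nat.card F < #(rationalPoints g) := by
  classical
  have := Fintype.ofFinite (ℙ F (Fin 3 → F))
  have : Module.Finite F W := Module.finite_of_finrank_pos (by omega)
  have := Module.finite_of_finite (M := W) F
  have := Fintype.ofFinite W
  set q := Nat.card F
  have hq : 1 < q := Finite.one_lt_card
  have card_W : #(Finset.univ.erase (0 : W)) + 1 = q ^ 3 := by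
    rw [Finset.card_erase_add_one (Finset.mem_univ _), Finset.card_univ, ← Nat.card_eq_fintype_card,
      Module.natCard_eq_pow_finrank (K := F), hW]
  have card_plane : Fintype.card (ℙ F (Fin 3 → F)) = q ^ 2 + q + 1 := by
    rw [← Nat.card_eq_fintype_card, card_projectivePlane]
  have card_through (p : ℙ F (Fin 3 → F)) : q ^ 2 ≤ #{g : W | p ∈ rationalPoints g.1} := by
    refine (card_pow_le_card_ker hW ((aeval p.rep).toLinearMap ∘ₗ W.subtype)).trans_eq ?_
    rw [← Nat.card_eq_finsetCard]
    exact Nat.card_congr (Equiv.subtypeEquivRight fun g => by simp [aeval_eq_eval])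
  by_contra! hle
  have : (q ^ 2 + q + 1) * q ^ 2 ≤ (q ^ 2 + q + 1) + #(Finset.univ.erase (0 : W)) * q :=
    calc (q ^ 2 + q + 1) * q ^ 2
      _ ≤ ∑ p : ℙ F (Fin 3 → F), #{g : W | p ∈ rationalPoints g.1} := by
          rw [← card_plane, ← Finset.card_univ]
          exact Finset.card_nsmul_le_sum _ _ _ fun p _ => card_through p
      _ = ∑ g : W, #(rationalPoints g.1) := by
          refine (Finset.sum_card_bipartiteAbove_eq_sum_card_bipartiteBelow
            fun p (g : W) => p ∈ rationalPoints g.1).trans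
              (Finset.sum_congr rfl fun g _ => congrArg Finset.card ?_)
          ext p
          simp
      _ = #(rationalPoints (0 : MvPolynomial (Fin 3) F)) +
          ∑ g ∈ Finset.univ.erase (0 : W), #(rationalPoints g.1) :=
          (Finset.add_sum_erase _ _ (Finset.mem_univ 0)).symm
      _ ≤ (q ^ 2 + q + 1) + #(Finset.univ.erase (0 : W)) * q := by
          refine Nat.add_le_add (card_plane ▸ Finset.card_le_univ _)
            (Finset.sum_le_card_nsmul _ _ _ fun g hg => ?_)
          exact hle g g.2 (by simpa using hg)
  nlinarith

variable {E : Type*} [Field E] [Algebra F E] {v : Fin 3 → E}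

theorem card_rationalPoints_add_le_of_mem_formsThrough (hv : LinearIndependent F v)
    (hq : 5 ≤ Nat.card F) (hn : n ≤ 5) (hf : f ∈ formsThrough F v n) (hf0 : f ≠ 0) :
    #(rationalPoints f) + Nat.card F ≤ n * Nat.card F + 2 := by
  induction n generalizing f with
  | zero => exact absurd (eq_zero_of_mem_formsThrough_zero hf) hf0
  | succ n ih =>
    by_cases! hl : ∃ l, VanishesOnLine f l
    · obtain ⟨l, hl⟩ := hl
      have hom : f.IsHomogeneous (1 + n) := add_comm n 1 ▸ hf.1
      obtain ⟨g, hg, rfl⟩ := hl.exists_eq_linearForm_mul hom (by omega)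
      have hgv := mem_formsThrough_of_linearForm_mul hv l.rep_nonzero hg hf.2
      have hg0 : g ≠ 0 := right_ne_zero_of_mul hf0
      by_cases! hm : ∃ m, VanishesOnLine g m
      · obtain ⟨m, hm⟩ := hm
        linarith [ih (by omega) hgv hg0,
          card_rationalPoints_linearForm_mul_le_of_vanishesOnLine (l := l) hm]
      · have hn0 : 0 < n := Nat.pos_of_ne_zero fun hn0 => by
          subst hn0
          exact hg0 (eq_zero_of_mem_formsThrough_zero hgv)
        linarith [card_rationalPoints_add_le_of_le_four hg hn0 (by omega) hm hq,
          card_rationalPoints_linearForm_mul_le (l := l) (g := g)]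
    · linarith [two_mul_card_rationalPoints_add_le hf.1 n.succ_pos hl]

theorem not_vanishesOnLine_of_mem_formsThrough_two (hv : LinearIndependent F v)
    (hq : 2 ≤ Nat.card F) (hg : g ∈ formsThrough F v 2) (hg0 : g ≠ 0) (l : ℙ F (Fin 3 → F)) :
    ¬VanishesOnLine g l := by
  intro hl
  obtain ⟨h, hh, rfl⟩ := hl.exists_eq_linearForm_mul (n := 1) hg.1 hq
  exact right_ne_zero_of_mul hg0 <| eq_zero_of_mem_formsThrough_one hv <|
    mem_formsThrough_of_linearForm_mul hv l.rep_nonzero hh hg.2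

theorem exists_conic_card_rationalPoints_eq (hv : LinearIndependent F v)
    (hspan : Submodule.span F (Set.range v) = ⊤) :
    ∃ g ∈ formsThrough F v 2, g ≠ 0 ∧ (∀ l, ¬VanishesOnLine g l) ∧
      #(rationalPoints g) = Nat.card F + 1 := by
  have finrank_eq : Module.finrank F (formsThrough F v 2) = 3 := by
    have := finrank_formsThrough_add hv hspan 1
    rw [Fintype.card_fin, Nat.multichoose_eq] at this
    exact Nat.add_right_cancel this
  obtain ⟨g, hg, hg0, hlt⟩ := exists_lt_card_rationalPoints finrank_eq
  have hl := not_vanishesOnLine_of_mem_formsThrough_two hv Finite.one_lt_card hg hg0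
  have := two_mul_card_rationalPoints_add_le hg.1 two_pos hl
  exact ⟨g, hg, hg0, hl, by omega⟩

theorem exists_mem_formsThrough_card_rationalPoints_eq (hv : LinearIndependent F v)
    (hspan : Submodule.span F (Set.range v) = ⊤) (hq : 5 ≤ Nat.card F) :
    ∃ f ∈ formsThrough F v 5, f ≠ 0 ∧ #(rationalPoints f) = 4 * Nat.card F + 2 := by
  classical
  have := Fintype.ofFinite (ℙ F (Fin 3 → F))
  obtain ⟨g, hg, hg0, hl, hcard⟩ := exists_conic_card_rationalPoints_eq hv hspan
  obtain ⟨R, hR⟩ := exists_two_lt_card_concurrent_external_lines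
    (isTangency_isTangentAt hg.1 hl).secantNumber_le (by rwa [order_eq_card])
    (by rwa [order_eq_card])
  obtain ⟨A, hA, hA3⟩ := Finset.exists_subset_card_eq hR
  have mem : (∏ l ∈ A, linearForm l.rep) * g ∈ formsThrough F v 5 := by
    have hom := IsHomogeneous.prod A (fun l => linearForm l.rep) (fun _ => 1) fun l _ =>
      isHomogeneous_linearForm l.rep
    rw [Finset.sum_const, hA3] at hom
    exact mul_mem_formsThrough hom hg
  have ne_zero : (∏ l ∈ A, linearForm l.rep) * g ≠ 0 :=
    mul_ne_zero (Finset.prod_ne_zero_iff.2 fun l _ => linearForm_ne_zero l.rep_nonzero) hg0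
  have le := card_rationalPoints_add_le_of_mem_formsThrough hv hq le_rfl mem ne_zero
  have lt := card_rationalPoints_prod_linearForm_mul (Finset.card_pos.1 (by omega))
    (hA.trans (Finset.filter_subset _ _)) fun l hlA => (Finset.mem_filter.1 (hA hlA)).2
  rw [hA3] at lt
  exact ⟨_, mem, ne_zero, by omega⟩

theorem ncard_eval_ne_zero_add_card_rationalPoints (f : MvPolynomial (Fin 3) F) :
    {x : ℙ F (Fin 3 → F) | eval x.rep f ≠ 0}.ncard + #(rationalPoints f) =
      Nat.card F ^ 2 + Nat.card F + 1 := by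
  rw [← card_projectivePlane, ← Set.ncard_add_ncard_compl {x | eval x.rep f ≠ 0},
    ← Set.ncard_coe_finset]
  congr 2
  ext
  simp

theorem le_ncard_eval_ne_zero_of_mem_formsThrough (hv : LinearIndependent F v)
    (hq : 5 ≤ Nat.card F) (hf : f ∈ formsThrough F v 5) (hf0 : f ≠ 0) :
    Nat.card F ^ 2 - 3 * Nat.card F - 1 ≤
      {x : ℙ F (Fin 3 → F) | eval x.rep f ≠ 0}.ncard := by
  have := card_rationalPoints_add_le_of_mem_formsThrough hv hq le_rfl hf hf0
  have := ncard_eval_ne_zero_add_card_rationalPoints f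
  omega

end CurvesThroughPoint

/-- Parameters of the code `C_L(Z, L_5)` for `q ≥ 5`: evaluating the quintics through a
degree-3 closed point (not on any rational line) at the `q² + q + 1` points of `P²(F_q)`
yields a code of length `q² + q + 1`, dimension `18` (the space of such quintics has
dimension `18` and the evaluation map is injective), and minimum distance exactly
`q² - 3q - 1`. -/
theorem stmt_18 (q : ℕ) (hq : IsPrimePow q) (hq5 : 5 ≤ q)
    (F E : Type) [Field F] [Fintype F] [Field E] [Fintype E] [Algebra F E]
    (hF : Fintype.card F = q) (hE : Fintype.card E = q ^ 3)
    -- `v` represents a degree-3 closed point of `P²`: its three Frobenius conjugates are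
    -- pairwise distinct and non-collinear (equivalently, linearly independent).
    (v : Fin 3 → E)
    (hv : LinearIndependent E ![v, fun i => v i ^ q, fun i => v i ^ q ^ 2]) :
    Nat.card (Projectivization F (Fin 3 → F)) = q ^ 2 + q + 1 ∧
    Module.finrank F
      ↥(homogeneousSubmodule (Fin 3) F 5 ⊓
          LinearMap.ker (MvPolynomial.aeval (R := F) v).toLinearMap) = 18 ∧
    (∀ f ∈ homogeneousSubmodule (Fin 3) F 5 ⊓
        LinearMap.ker (MvPolynomial.aeval (R := F) v).toLinearMap,
      (∀ x : Projectivization F (Fin 3 → F), MvPolynomial.eval x.rep f = 0) → f = 0) ∧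
    (∀ f ∈ homogeneousSubmodule (Fin 3) F 5 ⊓
        LinearMap.ker (MvPolynomial.aeval (R := F) v).toLinearMap, f ≠ 0 →
      q ^ 2 - 3 * q - 1 ≤
        {x : Projectivization F (Fin 3 → F) | MvPolynomial.eval x.rep f ≠ 0}.ncard) ∧
    (∃ f ∈ homogeneousSubmodule (Fin 3) F 5 ⊓
        LinearMap.ker (MvPolynomial.aeval (R := F) v).toLinearMap, f ≠ 0 ∧
      {x : Projectivization F (Fin 3 → F) | MvPolynomial.eval x.rep f ≠ 0}.ncard
        = q ^ 2 - 3 * q - 1) := by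
  subst hF
  have hvF : LinearIndependent F v := linearIndependent_of_pow_card_pow (e := Fin.val) <| by
    convert hv with k
    fin_cases k <;> simp
  have finrank_E : Module.finrank F E = 3 :=
    Nat.pow_right_injective hq.two_le (Module.card_eq_pow_finrank.symm.trans hE)
  have hspan := hvF.span_eq_top_of_card_eq_finrank (by rw [finrank_E, Fintype.card_fin])
  rw [← Nat.card_eq_fintype_card] at hq5 ⊢
  refine ⟨card_projectivePlane, ?dimension, fun f hf h => ?injective,
    fun f => le_ncard_eval_ne_zero_of_mem_formsThrough hvF hq5, ?attained⟩
  case dimension =>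
    have := finrank_formsThrough_add hvF hspan 4
    rw [Fintype.card_fin, Nat.multichoose_eq] at this
    exact Nat.add_right_cancel this
  case injective =>
    by_contra hf0
    have weight_pos := le_ncard_eval_ne_zero_of_mem_formsThrough hvF hq5 hf hf0
    have : 5 * Nat.card F ≤ Nat.card F ^ 2 := pow_two (Nat.card F) ▸ Nat.mul_le_mul_right _ hq5
    simp only [h, ne_eq, not_true_eq_false, Set.ofPred_false, Set.ncard_empty] at weight_pos
    omega
  case attained =>
    obtain ⟨f, hf, hf0, hcard⟩ := exists_mem_formsThrough_card_rationalPoints_eq hvF hspan hq5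
    have := ncard_eval_ne_zero_add_card_rationalPoints f
    exact ⟨f, hf, hf0, by omega⟩
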